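/- arXiv:0802.1496 — 19 statements merged into one kernel-verified Lean document; each statement's English description precedes it below -/
import Mathlib

section
/- Let L be a Lie-like algebra^{1-st} induced by a nonempty set S. Then for all x, y, z ∈ L and all h, k ∈ S one has [[x,y]_h, z]_k = [[x,y]_k, z]_h; that is, the outer and inner bracket indices in an iterated bracket may be interchanged. -/
/-- In a Lie-like algebra^{1-st} induced by a nonempty set `S`,
the outer and inner bracket indices in an iterated bracket may be interchanged:
`[[x,y]_h, z]_k = [[x,y]_k, z]_h`. -/
theorem stmt_0 (K : Type*) [Field K] (L : Type*) [AddCommGroup L] [Module K L]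
    (S : Type*) [Nonempty S]
    (br : S → L →ₗ[K] L →ₗ[K] L)
    (anti : ∀ (k : S) (x y : L), br k x y = - br k y x)
    (jacobi : ∀ (h k : S) (x y z : L),
      br k (br h x y) z + br h (br k y z) x + br k (br h z x) y = 0) :
    ∀ (h k : S) (x y z : L), br k (br h x y) z = br h (br k x y) z := by
  intro h k x y z
  have e1 := jacobi h k y z x
  have e2 := jacobi k h x y z
  have e3 : br k (br h x y) z - br h (br k x y) z
      = (br k (br h y z) x + br h (br k z x) y + br k (br h x y) z)
        - (br h (br k x y) z + br k (br h y z) x + br h (br k z x) y) := by abel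
  rw [e1, e2, sub_zero] at e3
  exact sub_eq_zero.mp e3
end

section
/- Let L be a Lie-like algebra^{1-st} induced by a nonempty set S, and let L^{ann} be its annihilator, i.e. the subspace of L spanned by all elements [x,y]_h − [x,y]_k with x, y ∈ L and h, k ∈ S. Then L^{ann} is an ideal of L: for every x ∈ L, every a ∈ L^{ann} and every s ∈ S, [x, a]_s ∈ L^{ann}. -/
/-- The annihilator of a Lie-like algebra^{1-st}: the subspace spanned by all
elements `[x,y]_h - [x,y]_k` with `x, y ∈ L` and `h, k ∈ S`. -/
def likeAnn1 (K : Type*) [Field K] {L : Type*} [AddCommGroup L] [Module K L]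
    {S : Type*} (br : S → L →ₗ[K] L →ₗ[K] L) : Submodule K L :=
  Submodule.span K {a : L | ∃ x y : L, ∃ h k : S, a = br h x y - br k x y}

/-- The annihilator of a Lie-like algebra^{1-st} is an ideal. -/
theorem stmt_1 (K : Type*) [Field K] (L : Type*) [AddCommGroup L] [Module K L]
    (S : Type*) [Nonempty S]
    (br : S → L →ₗ[K] L →ₗ[K] L)
    (anti : ∀ (k : S) (x y : L), br k x y = - br k y x)
    (jacobi : ∀ (h k : S) (x y z : L),
      br k (br h x y) z + br h (br k y z) x + br k (br h z x) y = 0) :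
    ∀ (x : L) (a : L) (s : S), a ∈ likeAnn1 K br → br s x a ∈ likeAnn1 K br := by
  intro x a s ha
  have gen : ∀ (x y : L) (h k : S), br h x y - br k x y ∈ likeAnn1 K br :=
    fun x y h k => Submodule.subset_span ⟨x, y, h, k, rfl⟩
  have key : likeAnn1 K br ≤ (likeAnn1 K br).comap (br s x) := by
    refine Submodule.span_le.mpr ?_
    rintro _ ⟨y, z, h, k, rfl⟩
    change br s x (br h y z - br k y z) ∈ likeAnn1 K br
    have e : br s x (br h y z - br k y z) =
        (br h (br h y z) x - br s (br h y z) x) + (br s (br k y z) x - br h (br k y z) x)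
        + (br h (br h x y) z - br k (br h x y) z)
        + (br h (br h z x) y - br k (br h z x) y) := by
      have j1 := jacobi h k x y z
      have j2 := jacobi h h x y z
      rw [map_sub, anti s x, anti s x (br k y z)]
      rw [← sub_eq_zero, ← sub_eq_zero.mpr (j1.trans j2.symm)]
      abel
    rw [e]
    exact add_mem (add_mem (add_mem (gen _ _ _ _) (gen _ _ _ _)) (gen _ _ _ _)) (gen _ _ _ _)
  exact key ha
end

section
/- Let L be a Lie-like algebra^{1-st} induced by a nonempty set S with annihilator L^{ann}. Then on the quotient vector space L/L^{ann} there is a well-defined bilinear bracket given by [x + L^{ann}, y + L^{ann}] := [x,y]_k + L^{ann} for any k ∈ S (the result is independent of the choice of k), and with this bracket L/L^{ann} is a Lie algebra: the bracket is anti-symmetric and satisfies the Jacobi identity. -/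
/-- On the quotient `L / L^{ann}` there is a well-defined bilinear
bracket `[x + L^{ann}, y + L^{ann}] = [x,y]_k + L^{ann}` (independent of `k ∈ S`),
and with it `L / L^{ann}` is a Lie algebra: the bracket is anti-symmetric and
satisfies the Jacobi identity. -/
theorem stmt_2 (K : Type*) [Field K] (L : Type*) [AddCommGroup L] [Module K L]
    (S : Type*) [Nonempty S]
    (br : S → L →ₗ[K] L →ₗ[K] L)
    (anti : ∀ (k : S) (x y : L), br k x y = - br k y x)
    (jacobi : ∀ (h k : S) (x y z : L),
      br k (br h x y) z + br h (br k y z) x + br k (br h z x) y = 0) :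
    ∃ qbr : (L ⧸ likeAnn1 K br) →ₗ[K] (L ⧸ likeAnn1 K br) →ₗ[K] (L ⧸ likeAnn1 K br),
      (∀ (k : S) (x y : L),
        qbr (Submodule.Quotient.mk x) (Submodule.Quotient.mk y)
          = Submodule.Quotient.mk (br k x y)) ∧
      (∀ u v : L ⧸ likeAnn1 K br, qbr u v = - qbr v u) ∧
      (∀ u v w : L ⧸ likeAnn1 K br,
        qbr (qbr u v) w + qbr (qbr v w) u + qbr (qbr w u) v = 0) := by
  classical
  have hd : ∀ (h k : S) (x y : L), (likeAnn1 K br).mkQ (br h x y) = (likeAnn1 K br).mkQ (br k x y) := by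
    intro h k x y
    rw [← sub_eq_zero, ← map_sub]
    exact (Submodule.Quotient.mk_eq_zero _).2 (Submodule.subset_span ⟨x, y, h, k, rfl⟩)
  obtain ⟨k0⟩ := ‹Nonempty S›
  have hT : ∀ (h k : S) (x y z : L), (likeAnn1 K br).mkQ (br k0 (br h y z) x)
      = (likeAnn1 K br).mkQ (br k0 (br k y z) x) := by
    intro h k x y z
    have e1 := congrArg (likeAnn1 K br).mkQ (jacobi h h x y z)
    have e2 := congrArg (likeAnn1 K br).mkQ (jacobi h k x y z)
    simp only [map_add] at e1 e2
    rw [hd h k0 _ z, hd h k0 _ x, hd h k0 _ y] at e1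
    rw [hd k k0 _ z, hd h k0 _ x, hd k k0 _ y] at e2
    rw [← e2] at e1
    exact add_left_cancel (add_right_cancel e1)
  have hI : ∀ a ∈ likeAnn1 K br, ∀ x, (likeAnn1 K br).mkQ (br k0 a x) = 0 := by
    intro a ha x
    have : likeAnn1 K br ≤ LinearMap.ker ((likeAnn1 K br).mkQ ∘ₗ (br k0).flip x) := by
      refine Submodule.span_le.2 ?_
      rintro _ ⟨y, z, h, k, rfl⟩
      simp only [SetLike.mem_coe, LinearMap.mem_ker, LinearMap.comp_apply, LinearMap.flip_apply,
        map_sub, LinearMap.sub_apply]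
      rw [hT h k x y z, sub_self]
    exact this ha
  have hI2 : ∀ a ∈ likeAnn1 K br, ∀ x, (likeAnn1 K br).mkQ (br k0 x a) = 0 := by
    intro a ha x
    rw [anti, map_neg, hI a ha x, neg_zero]
  let B : L →ₗ[K] L →ₗ[K] (L ⧸ likeAnn1 K br) := (br k0).compr₂ (likeAnn1 K br).mkQ
  let C : (L ⧸ likeAnn1 K br) →ₗ[K] L →ₗ[K] (L ⧸ likeAnn1 K br) :=
    (likeAnn1 K br).liftQ B (fun a ha => LinearMap.ext fun x => hI a ha x)
  let D : (L ⧸ likeAnn1 K br) →ₗ[K] (L ⧸ likeAnn1 K br) →ₗ[K] (L ⧸ likeAnn1 K br) :=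
    (likeAnn1 K br).liftQ C.flip (fun a ha => LinearMap.ext fun u => by
      obtain ⟨x, rfl⟩ := Submodule.Quotient.mk_surjective _ u
      exact hI2 a ha x)
  have hD : ∀ x y : L, D.flip (Submodule.Quotient.mk x) (Submodule.Quotient.mk y)
      = Submodule.Quotient.mk (br k0 x y) := fun x y => rfl
  refine ⟨D.flip, fun k x y => (hD x y).trans (hd k0 k x y), ?_, ?_⟩
  · intro u v
    obtain ⟨x, rfl⟩ := Submodule.Quotient.mk_surjective _ u
    obtain ⟨y, rfl⟩ := Submodule.Quotient.mk_surjective _ v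
    rw [hD, hD, anti, Submodule.Quotient.mk_neg]
  · intro u v w
    obtain ⟨x, rfl⟩ := Submodule.Quotient.mk_surjective _ u
    obtain ⟨y, rfl⟩ := Submodule.Quotient.mk_surjective _ v
    obtain ⟨z, rfl⟩ := Submodule.Quotient.mk_surjective _ w
    simp only [hD]
    rw [← Submodule.Quotient.mk_add, ← Submodule.Quotient.mk_add, jacobi,
      Submodule.Quotient.mk_zero]
end

section
/- Let L be a Lie-like algebra^{1-st} induced by a nonempty set S. For k ∈ S define the adjoint map ad_k : L → End(L) by ad_k(x)(a) := [x, a]_k. Then the family {ad_k}_{k∈S} makes L an ordinary module over itself: for all x, y ∈ L and h, k ∈ S one has ad_h([x,y]_k) = ad_h(x)∘ad_k(y) − ad_h(y)∘ad_k(x) and ad_k(x)∘ad_h(y) = ad_h(x)∘ad_k(y). -/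
/-- For a Lie-like algebra^{1-st} `L` induced by `S`, the adjoint maps
`ad_k(x) = [x, ·]_k` make `L` an ordinary module over itself:
`ad_h([x,y]_k) = ad_h(x)∘ad_k(y) − ad_h(y)∘ad_k(x)` and
`ad_k(x)∘ad_h(y) = ad_h(x)∘ad_k(y)`. -/
theorem stmt_3 (K : Type*) [Field K] (L : Type*) [AddCommGroup L] [Module K L]
    (S : Type*) [Nonempty S]
    (br : S → L →ₗ[K] L →ₗ[K] L)
    (anti : ∀ (k : S) (x y : L), br k x y = - br k y x)
    (jacobi : ∀ (h k : S) (x y z : L),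
      br k (br h x y) z + br h (br k y z) x + br k (br h z x) y = 0) :
    ∀ (h k : S) (x y : L),
      (br h (br k x y) = br h x ∘ₗ br k y - br h y ∘ₗ br k x) ∧
      (br k x ∘ₗ br h y = br h x ∘ₗ br k y) := by
  have key : ∀ (h k : S) (x y z : L), br k (br h x y) z = br h (br k x y) z := by
    intro h k x y z
    have h1 := jacobi h k x y z
    have h2 := jacobi h k y z x
    have h3 := jacobi h k z x y
    have g1 := jacobi k h x y z
    have g2 := jacobi k h y z x
    have g3 := jacobi k h z x y
    have e : br k (br h x y) z - br h (br k x y) z =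
        (br k (br h x y) z + br h (br k y z) x + br k (br h z x) y) -
        (br h (br k y z) x + br k (br h z x) y + br h (br k x y) z) := by abel
    rw [h1, g2, sub_zero] at e
    exact sub_eq_zero.mp e
  intro h k x y
  constructor
  · ext z
    have j := jacobi h k x y z
    rw [key h k x y z, key h k z x y, anti k z x, map_neg, LinearMap.neg_apply] at j
    simp only [LinearMap.sub_apply, LinearMap.comp_apply]
    rw [anti h x (br k y z), anti h y (br k x z), ← sub_eq_zero, ← j]
    abel
  · ext z
    simp only [LinearMap.comp_apply]
    rw [anti k x, anti h x, key]
end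

section
/- Let L be a Lie-like algebra^{1-st} induced by a nonempty set S and let (V, {f_k}_{k∈S}) be an ordinary module over L. Then the annihilator V^{ann}, i.e. the subspace of V spanned by all vectors (f_h(x) − f_k(x))(v) with x ∈ L, v ∈ V and h, k ∈ S, is an ordinary submodule of V: f_s(x)(V^{ann}) ⊆ V^{ann} for all x ∈ L and s ∈ S. -/
/-- The annihilator of an ordinary module `(V, {f_k})` over a Lie-like
algebra^{1-st}: the subspace spanned by all `(f_h(x) − f_k(x))(v)`. -/
def modAnn1 (K : Type*) [Field K] {L : Type*} [AddCommGroup L] [Module K L]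
    {V : Type*} [AddCommGroup V] [Module K V]
    {S : Type*} (f : S → L →ₗ[K] Module.End K V) : Submodule K V :=
  Submodule.span K {w : V | ∃ x : L, ∃ v : V, ∃ h k : S, w = (f h x - f k x) v}

/-- The annihilator of an ordinary module over a Lie-like
algebra^{1-st} is an ordinary submodule. -/
theorem stmt_4 (K : Type*) [Field K] (L : Type*) [AddCommGroup L] [Module K L]
    (S : Type*) [Nonempty S]
    (br : S → L →ₗ[K] L →ₗ[K] L)
    (anti : ∀ (k : S) (x y : L), br k x y = - br k y x)
    (jacobi : ∀ (h k : S) (x y z : L),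
      br k (br h x y) z + br h (br k y z) x + br k (br h z x) y = 0)
    (V : Type*) [AddCommGroup V] [Module K V]
    (f : S → L →ₗ[K] Module.End K V)
    (hmod1 : ∀ (h k : S) (x y : L), f h (br k x y) = f h x * f k y - f h y * f k x)
    (hmod2 : ∀ (h k : S) (x y : L), f k x * f h y = f h x * f k y) :
    ∀ (s : S) (x : L) (v : V), v ∈ modAnn1 K f → f s x v ∈ modAnn1 K f := by
  intro s x v hv
  refine Submodule.span_induction (p := fun v _ => f s x v ∈ modAnn1 K f) ?_ ?_ ?_ ?_ hv
  · rintro w ⟨y, u, h, k, rfl⟩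
    apply Submodule.subset_span
    refine ⟨x, f s y u, h, k, ?_⟩
    have h1 := congrArg (fun g : Module.End K V => g u) (hmod2 h s x y)
    have h2 := congrArg (fun g : Module.End K V => g u) (hmod2 k s x y)
    simp only [Module.End.mul_apply] at h1 h2
    simp only [LinearMap.sub_apply, map_sub, h1, h2]
  · simp
  · intro a b _ _ ha hb
    rw [map_add]
    exact Submodule.add_mem _ ha hb
  · intro c a _ ha
    rw [map_smul]
    exact Submodule.smul_mem _ c ha
end

section
/- Let L be a Lie-like algebra^{2-nd} induced by a nonempty set S. Then for all x, y, z ∈ L and all h, k ∈ S one has ⟨x, ⟨y,z⟩_h⟩_k + ⟨x, ⟨z,y⟩_k⟩_h = 0. -/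
/-- In a Lie-like algebra^{2-nd} induced by a nonempty set `S`,
for all `x, y, z ∈ L` and `h, k ∈ S` one has
`⟨x, ⟨y,z⟩_h⟩_k + ⟨x, ⟨z,y⟩_k⟩_h = 0`. -/
theorem stmt_5 (K : Type*) [Field K] (L : Type*) [AddCommGroup L] [Module K L]
    (S : Type*) [Nonempty S]
    (ang : S → L →ₗ[K] L →ₗ[K] L)
    (leib : ∀ (h k : S) (x y z : L),
      ang h (ang k x y) z = ang k x (ang h y z) + ang k (ang h x z) y)
    (swap : ∀ (h k : S) (x y z : L),
      ang h (ang k x y) z = ang k (ang h x y) z) :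
    ∀ (h k : S) (x y z : L),
      ang k x (ang h y z) + ang h x (ang k z y) = 0 := by
  intro h k x y z
  have h1 := leib h k x y z
  have h2 := leib k h x z y
  rw [h2, ← add_assoc] at h1
  exact right_eq_add.mp (h1.trans (by abel))
end

section
/- Let L be a Lie-like algebra^{2-nd} induced by a nonempty set S, and let L^{ann,+} be its plus annihilator, i.e. the subspace of L spanned by all elements ⟨x,y⟩_h + ⟨y,x⟩_k with x, y ∈ L and h, k ∈ S. Then L^{ann,+} is an ideal of L: ⟨a, x⟩_s ∈ L^{ann,+} and ⟨x, a⟩_s ∈ L^{ann,+} for all x ∈ L, a ∈ L^{ann,+} and s ∈ S. -/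
/-- The plus annihilator of a Lie-like algebra^{2-nd}: the subspace spanned by
all elements `⟨x,y⟩_h + ⟨y,x⟩_k` with `x, y ∈ L` and `h, k ∈ S`. -/
def likeAnnPlus2 (K : Type*) [Field K] {L : Type*} [AddCommGroup L] [Module K L]
    {S : Type*} (ang : S → L →ₗ[K] L →ₗ[K] L) : Submodule K L :=
  Submodule.span K {a : L | ∃ x y : L, ∃ h k : S, a = ang h x y + ang k y x}

/-- The plus annihilator of a Lie-like algebra^{2-nd} is an ideal:
`⟨a, x⟩_s ∈ L^{ann,+}` and `⟨x, a⟩_s ∈ L^{ann,+}` for `x ∈ L`, `a ∈ L^{ann,+}`,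
`s ∈ S`. -/
theorem stmt_6 (K : Type*) [Field K] (L : Type*) [AddCommGroup L] [Module K L]
    (S : Type*) [Nonempty S]
    (ang : S → L →ₗ[K] L →ₗ[K] L)
    (leib : ∀ (h k : S) (x y z : L),
      ang h (ang k x y) z = ang k x (ang h y z) + ang k (ang h x z) y)
    (swap : ∀ (h k : S) (x y z : L),
      ang h (ang k x y) z = ang k (ang h x y) z) :
    ∀ (x : L) (a : L) (s : S), a ∈ likeAnnPlus2 K ang →
      ang s a x ∈ likeAnnPlus2 K ang ∧ ang s x a ∈ likeAnnPlus2 K ang := by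
  have key : ∀ (x : L) (a : L) (s : S), a ∈ likeAnnPlus2 K ang →
      ang s a x ∈ likeAnnPlus2 K ang := by
    intro z a s ha
    unfold likeAnnPlus2 at ha
    induction ha using Submodule.span_induction with
    | mem a h =>
      obtain ⟨x, y, h, k, rfl⟩ := h
      have e : ang s (ang h x y + ang k y x) z =
          (ang h x (ang s y z) + ang k (ang s y z) x)
            + (ang h (ang s x z) y + ang k y (ang s x z)) := by
        rw [map_add, LinearMap.add_apply, leib s h, leib s k]
        abel
      rw [e]
      exact add_mem (Submodule.subset_span ⟨_, _, _, _, rfl⟩)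
        (Submodule.subset_span ⟨_, _, _, _, rfl⟩)
    | zero => simp
    | add a b _ _ ha hb =>
      rw [map_add, LinearMap.add_apply]
      exact add_mem ha hb
    | smul c a _ ha =>
      rw [map_smul, LinearMap.smul_apply]
      exact Submodule.smul_mem _ c ha
  intro x a s ha
  refine ⟨key x a s ha, ?_⟩
  have h1 : ang s x a + ang s a x ∈ likeAnnPlus2 K ang :=
    Submodule.subset_span ⟨_, _, _, _, rfl⟩
  exact (Submodule.add_mem_iff_left _ (key x a s ha)).1 h1
end

section
/- Let L be a Lie-like algebra^{2-nd} induced by a nonempty set S, and let L^{ann,−} be its minus annihilator, i.e. the subspace of L spanned by all elements ⟨x,y⟩_h − ⟨x,y⟩_k with x, y ∈ L and h, k ∈ S. Then L^{ann,−} is an ideal of L (⟨a, x⟩_s ∈ L^{ann,−} and ⟨x, a⟩_s ∈ L^{ann,−} for all x ∈ L, a ∈ L^{ann,−}, s ∈ S), and moreover L^{ann,−} is contained in the plus annihilator L^{ann,+} (the span of all ⟨x,y⟩_h + ⟨y,x⟩_k). -/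
/-- The minus annihilator of a Lie-like algebra^{2-nd}: the subspace spanned by
all elements `⟨x,y⟩_h − ⟨x,y⟩_k` with `x, y ∈ L` and `h, k ∈ S`. -/
def likeAnnMinus2 (K : Type*) [Field K] {L : Type*} [AddCommGroup L] [Module K L]
    {S : Type*} (ang : S → L →ₗ[K] L →ₗ[K] L) : Submodule K L :=
  Submodule.span K {a : L | ∃ x y : L, ∃ h k : S, a = ang h x y - ang k x y}

/-- The minus annihilator of a Lie-like algebra^{2-nd} is an ideal,
and it is contained in the plus annihilator. -/
theorem stmt_7 (K : Type*) [Field K] (L : Type*) [AddCommGroup L] [Module K L]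
    (S : Type*) [Nonempty S]
    (ang : S → L →ₗ[K] L →ₗ[K] L)
    (leib : ∀ (h k : S) (x y z : L),
      ang h (ang k x y) z = ang k x (ang h y z) + ang k (ang h x z) y)
    (swap : ∀ (h k : S) (x y z : L),
      ang h (ang k x y) z = ang k (ang h x y) z) :
    (∀ (x : L) (a : L) (s : S), a ∈ likeAnnMinus2 K ang →
      ang s a x ∈ likeAnnMinus2 K ang ∧ ang s x a ∈ likeAnnMinus2 K ang) ∧
    likeAnnMinus2 K ang ≤ likeAnnPlus2 K ang := by
  have gen : ∀ (x y : L) (h k : S), ang h x y - ang k x y ∈ likeAnnMinus2 K ang :=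
    fun x y h k => Submodule.subset_span ⟨x, y, h, k, rfl⟩
  have genp : ∀ (x y : L) (h k : S), ang h x y + ang k y x ∈ likeAnnPlus2 K ang :=
    fun x y h k => Submodule.subset_span ⟨x, y, h, k, rfl⟩
  refine ⟨fun z a s ha => ⟨?_, ?_⟩, ?_⟩
  · have key : likeAnnMinus2 K ang ≤ (likeAnnMinus2 K ang).comap ((ang s).flip z) := by
      refine Submodule.span_le.2 ?_
      rintro _ ⟨x, y, h, k, rfl⟩
      change ang s (ang h x y - ang k x y) z ∈ likeAnnMinus2 K ang
      rw [map_sub, LinearMap.sub_apply, swap s h, swap s k]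
      exact gen _ _ _ _
    exact key ha
  · have key : likeAnnMinus2 K ang ≤ (likeAnnMinus2 K ang).comap (ang s z) := by
      refine Submodule.span_le.2 ?_
      rintro _ ⟨x, y, h, k, rfl⟩
      change ang s z (ang h x y - ang k x y) ∈ likeAnnMinus2 K ang
      have e : ang s z (ang h x y - ang k x y) =
          (ang h (ang s z x) y - ang k (ang s z x) y)
            - (ang h (ang s z y) x - ang k (ang s z y) x) := by
        rw [leib h s z x y, leib k s z x y, swap h s z y x, swap k s z y x, map_sub]
        abel
      rw [e]
      exact Submodule.sub_mem _ (gen _ _ _ _) (gen _ _ _ _)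
    exact key ha
  · refine Submodule.span_le.2 ?_
    rintro _ ⟨x, y, h, k, rfl⟩
    have e : ang h x y - ang k x y =
        (ang h x y + ang h y x) - (ang k x y + ang h y x) := by abel
    rw [e]
    exact Submodule.sub_mem _ (genp _ _ _ _) (genp _ _ _ _)
end

section
/- Let L be a Lie-like algebra^{2-nd} induced by a nonempty set S with plus annihilator L^{ann,+}. Then on the quotient vector space L/L^{ann,+} there is a well-defined bilinear bracket [x + L^{ann,+}, y + L^{ann,+}] := ⟨x,y⟩_k + L^{ann,+} for any k ∈ S (independent of the choice of k), and with this bracket L/L^{ann,+} is a Lie algebra: the bracket is anti-symmetric and satisfies the Jacobi identity. -/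
theorem lap_gen {K : Type*} [Field K] {L : Type*} [AddCommGroup L] [Module K L]
    {S : Type*} (ang : S → L →ₗ[K] L →ₗ[K] L) (h k : S) (x y : L) :
    ang h x y + ang k y x ∈ likeAnnPlus2 K ang :=
  Submodule.subset_span ⟨x, y, h, k, rfl⟩

theorem lap_right {K : Type*} [Field K] {L : Type*} [AddCommGroup L] [Module K L]
    {S : Type*} (ang : S → L →ₗ[K] L →ₗ[K] L)
    (leib : ∀ (h k : S) (x y z : L),
      ang h (ang k x y) z = ang k x (ang h y z) + ang k (ang h x z) y)
    (l : S) (z a : L) (ha : a ∈ likeAnnPlus2 K ang) :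
    ang l a z ∈ likeAnnPlus2 K ang := by
  have : likeAnnPlus2 K ang ≤ (likeAnnPlus2 K ang).comap ((ang l).flip z) := by
    conv_lhs => unfold likeAnnPlus2
    rw [Submodule.span_le]
    rintro _ ⟨x, y, h, k, rfl⟩
    have e : ang l (ang h x y + ang k y x) z =
        (ang h x (ang l y z) + ang k (ang l y z) x)
        + (ang h (ang l x z) y + ang k y (ang l x z)) := by
      rw [map_add, LinearMap.add_apply, leib l h x y z, leib l k y x z]
      abel
    change ang l (ang h x y + ang k y x) z ∈ likeAnnPlus2 K ang
    rw [e]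
    exact add_mem (lap_gen ang _ _ _ _) (lap_gen ang _ _ _ _)
  exact this ha

theorem lap_left {K : Type*} [Field K] {L : Type*} [AddCommGroup L] [Module K L]
    {S : Type*} (ang : S → L →ₗ[K] L →ₗ[K] L)
    (leib : ∀ (h k : S) (x y z : L),
      ang h (ang k x y) z = ang k x (ang h y z) + ang k (ang h x z) y)
    (l : S) (z a : L) (ha : a ∈ likeAnnPlus2 K ang) :
    ang l z a ∈ likeAnnPlus2 K ang :=
  (Submodule.add_mem_iff_left _ (lap_right ang leib l z a ha)).1 (lap_gen ang l l z a)

/-- On the quotient `L / L^{ann,+}` there is a well-defined bilinear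
bracket `[x + L^{ann,+}, y + L^{ann,+}] = ⟨x,y⟩_k + L^{ann,+}` (independent of
`k ∈ S`), making `L / L^{ann,+}` a Lie algebra: anti-symmetric and satisfying
the Jacobi identity. -/
theorem stmt_8 (K : Type*) [Field K] (L : Type*) [AddCommGroup L] [Module K L]
    (S : Type*) [Nonempty S]
    (ang : S → L →ₗ[K] L →ₗ[K] L)
    (leib : ∀ (h k : S) (x y z : L),
      ang h (ang k x y) z = ang k x (ang h y z) + ang k (ang h x z) y)
    (swap : ∀ (h k : S) (x y z : L),
      ang h (ang k x y) z = ang k (ang h x y) z) :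
    ∃ qbr : (L ⧸ likeAnnPlus2 K ang) →ₗ[K] (L ⧸ likeAnnPlus2 K ang) →ₗ[K]
        (L ⧸ likeAnnPlus2 K ang),
      (∀ (k : S) (x y : L),
        qbr (Submodule.Quotient.mk x) (Submodule.Quotient.mk y)
          = Submodule.Quotient.mk (ang k x y)) ∧
      (∀ u v : L ⧸ likeAnnPlus2 K ang, qbr u v = - qbr v u) ∧
      (∀ u v w : L ⧸ likeAnnPlus2 K ang,
        qbr (qbr u v) w + qbr (qbr v w) u + qbr (qbr w u) v = 0) := by
  obtain ⟨s⟩ := ‹Nonempty S›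
  let I := likeAnnPlus2 K ang
  let f : L →ₗ[K] (L ⧸ I) →ₗ[K] (L ⧸ I) :=
    { toFun := fun x => I.mapQ I (ang s x) (fun a ha => lap_left ang leib s x a ha)
      map_add' := by
        intro x y
        ext z
        simp
      map_smul' := by
        intro c y
        ext z
        simp }
  have hf : I ≤ LinearMap.ker f := by
    intro a ha
    rw [LinearMap.mem_ker]
    ext z
    change (Submodule.Quotient.mk (ang s a z) : L ⧸ I) = 0
    rw [Submodule.Quotient.mk_eq_zero]
    exact lap_right ang leib s z a ha
  have key : ∀ x y : L, I.liftQ f hf (Submodule.Quotient.mk x) (Submodule.Quotient.mk y)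
      = Submodule.Quotient.mk (ang s x y) := fun x y => rfl
  refine ⟨I.liftQ f hf, ?_, ?_, ?_⟩
  · intro k x y
    rw [key, Submodule.Quotient.eq]
    have := sub_mem (lap_gen ang s s x y) (lap_gen ang k s x y)
    rwa [add_sub_add_right_eq_sub] at this
  · intro u v
    obtain ⟨x, rfl⟩ := Submodule.Quotient.mk_surjective _ u
    obtain ⟨y, rfl⟩ := Submodule.Quotient.mk_surjective _ v
    rw [key, key, ← Submodule.Quotient.mk_neg, Submodule.Quotient.eq, sub_neg_eq_add]
    exact lap_gen ang s s x y
  · intro u v w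
    obtain ⟨x, rfl⟩ := Submodule.Quotient.mk_surjective _ u
    obtain ⟨y, rfl⟩ := Submodule.Quotient.mk_surjective _ v
    obtain ⟨z, rfl⟩ := Submodule.Quotient.mk_surjective _ w
    simp only [key]
    rw [← Submodule.Quotient.mk_add, ← Submodule.Quotient.mk_add,
      Submodule.Quotient.mk_eq_zero]
    have e : ang s (ang s x y) z + ang s (ang s y z) x + ang s (ang s z x) y =
        (ang s x (ang s y z) + ang s (ang s y z) x)
        + ang s (ang s x z + ang s z x) y := by
      rw [map_add, LinearMap.add_apply, leib s s x y z]
      abel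
    rw [e]
    exact add_mem (lap_gen ang _ _ _ _) (lap_right ang leib s y _ (lap_gen ang _ _ _ _))
end

section
/- Let L be a Lie-like algebra^{2-nd} induced by a nonempty set S with minus annihilator L^{ann,−}. Then on the quotient vector space L/L^{ann,−} there is a well-defined bilinear operation ⟨x + L^{ann,−}, y + L^{ann,−}⟩ := ⟨x,y⟩_k + L^{ann,−} for any k ∈ S (independent of the choice of k), and with this operation L/L^{ann,−} is a Leibniz algebra: ⟨⟨u,v⟩, w⟩ = ⟨u, ⟨v,w⟩⟩ + ⟨⟨u,w⟩, v⟩ for all u, v, w in the quotient. -/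
/-- On the quotient `L / L^{ann,−}` there is a well-defined bilinear
operation `⟨x + L^{ann,−}, y + L^{ann,−}⟩ = ⟨x,y⟩_k + L^{ann,−}` (independent of
`k ∈ S`), making `L / L^{ann,−}` a Leibniz algebra:
`⟨⟨u,v⟩, w⟩ = ⟨u, ⟨v,w⟩⟩ + ⟨⟨u,w⟩, v⟩`. -/
theorem stmt_9 (K : Type*) [Field K] (L : Type*) [AddCommGroup L] [Module K L]
    (S : Type*) [Nonempty S]
    (ang : S → L →ₗ[K] L →ₗ[K] L)
    (leib : ∀ (h k : S) (x y z : L),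
      ang h (ang k x y) z = ang k x (ang h y z) + ang k (ang h x z) y)
    (swap : ∀ (h k : S) (x y z : L),
      ang h (ang k x y) z = ang k (ang h x y) z) :
    ∃ qang : (L ⧸ likeAnnMinus2 K ang) →ₗ[K] (L ⧸ likeAnnMinus2 K ang) →ₗ[K]
        (L ⧸ likeAnnMinus2 K ang),
      (∀ (k : S) (x y : L),
        qang (Submodule.Quotient.mk x) (Submodule.Quotient.mk y)
          = Submodule.Quotient.mk (ang k x y)) ∧
      (∀ u v w : L ⧸ likeAnnMinus2 K ang,
        qang (qang u v) w = qang u (qang v w) + qang (qang u w) v) := by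
  have gen : ∀ (h k : S) (x y : L), ang h x y - ang k x y ∈ likeAnnMinus2 K ang :=
    fun h k x y => Submodule.subset_span ⟨x, y, h, k, rfl⟩
  have left0 : ∀ (j h k : S) (x y z : L),
      ang j (ang h x y - ang k x y) z ∈ likeAnnMinus2 K ang := by
    intro j h k x y z
    have e : ang j (ang h x y - ang k x y) z
        = (ang j (ang h x y) z - ang k (ang h x y) z)
          + (ang h (ang k x y) z - ang j (ang k x y) z) := by
      rw [swap h k x y z, map_sub, LinearMap.sub_apply]; abel
    rw [e]
    exact add_mem (gen _ _ _ _) (gen _ _ _ _)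
  have left : ∀ (j : S) (z a : L), a ∈ likeAnnMinus2 K ang →
      ang j a z ∈ likeAnnMinus2 K ang := by
    intro j z a ha
    have hle : likeAnnMinus2 K ang ≤ (likeAnnMinus2 K ang).comap ((ang j).flip z) := by
      conv_lhs => unfold likeAnnMinus2
      rw [Submodule.span_le]
      rintro _ ⟨x, y, h, k, rfl⟩
      exact left0 j h k x y z
    exact hle ha
  have right : ∀ (j : S) (z a : L), a ∈ likeAnnMinus2 K ang →
      ang j z a ∈ likeAnnMinus2 K ang := by
    intro j z a ha
    have hle : likeAnnMinus2 K ang ≤ (likeAnnMinus2 K ang).comap (ang j z) := by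
      conv_lhs => unfold likeAnnMinus2
      rw [Submodule.span_le]
      rintro _ ⟨x, y, h, k, rfl⟩
      change ang j z (ang h x y - ang k x y) ∈ likeAnnMinus2 K ang
      have e : ang j z (ang h x y - ang k x y)
          = (ang h (ang j z x) y - ang k (ang j z x) y)
            + ang j (ang k z y - ang h z y) x := by
        rw [leib h j z x y, leib k j z x y, map_sub, map_sub, LinearMap.sub_apply]; abel
      rw [e]
      exact add_mem (gen _ _ _ _) (left0 _ _ _ _ _ _)
    exact hle ha
  obtain ⟨k₀⟩ := ‹Nonempty S›
  let B := (ang k₀).compr₂ (likeAnnMinus2 K ang).mkQ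
  let C := (likeAnnMinus2 K ang).liftQ B.flip (by
    intro a ha
    rw [LinearMap.mem_ker]
    ext x
    exact (Submodule.Quotient.mk_eq_zero _).2 (right k₀ x a ha))
  let D := (likeAnnMinus2 K ang).liftQ C.flip (by
    intro a ha
    rw [LinearMap.mem_ker]
    ext x
    exact (Submodule.Quotient.mk_eq_zero _).2 (left k₀ x a ha))
  have hD : ∀ (k : S) (x y : L),
      D (Submodule.Quotient.mk x) (Submodule.Quotient.mk y)
        = Submodule.Quotient.mk (ang k x y) := by
    intro k x y
    exact (Submodule.Quotient.eq _).2 (gen k₀ k x y)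
  refine ⟨D, hD, ?_⟩
  intro u v w
  obtain ⟨x, rfl⟩ := Submodule.Quotient.mk_surjective _ u
  obtain ⟨y, rfl⟩ := Submodule.Quotient.mk_surjective _ v
  obtain ⟨z, rfl⟩ := Submodule.Quotient.mk_surjective _ w
  simp only [hD k₀]
  rw [leib, Submodule.Quotient.mk_add]
end

section
/- Let L be a Lie-like algebra^{2-nd} induced by a nonempty set S. For k ∈ S define the right multiplication r_k(x) : a ↦ ⟨a, x⟩_k and the left multiplication ℓ_k(x) : a ↦ ⟨x, a⟩_k. Then setting f_k := −r_k and g_k := ℓ_k makes L an ordinary module over itself; explicitly, for all x, y ∈ L and h, k ∈ S: f_h(⟨x,y⟩_k) = f_h(x)∘f_k(y) − f_k(y)∘f_h(x); g_h(⟨x,y⟩_k) = g_h(x)∘f_k(y) − f_k(y)∘g_h(x); g_k(x)∘g_h(y) = g_h(x)∘f_k(y) = g_k(x)∘f_h(y); f_k(x)∘f_h(y) = f_h(x)∘f_k(y); and f_k(x)∘g_h(y) = f_h(x)∘g_k(y). -/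
/-- For a Lie-like algebra^{2-nd} `L` induced by `S`, setting
`f_k := −r_k` (negated right multiplication) and `g_k := ℓ_k` (left
multiplication) makes `L` an ordinary module over itself; explicitly all five
ordinary-module identities hold. -/
theorem stmt_10 (K : Type*) [Field K] (L : Type*) [AddCommGroup L] [Module K L]
    (S : Type*) [Nonempty S]
    (ang : S → L →ₗ[K] L →ₗ[K] L)
    (leib : ∀ (h k : S) (x y z : L),
      ang h (ang k x y) z = ang k x (ang h y z) + ang k (ang h x z) y)
    (swap : ∀ (h k : S) (x y z : L),
      ang h (ang k x y) z = ang k (ang h x y) z)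
    (f g : S → L →ₗ[K] Module.End K L)
    (hf : ∀ (k : S) (x a : L), f k x a = - ang k a x)
    (hg : ∀ (k : S) (x a : L), g k x a = ang k x a) :
    ∀ (h k : S) (x y : L),
      (f h (ang k x y) = f h x * f k y - f k y * f h x) ∧
      (g h (ang k x y) = g h x * f k y - f k y * g h x) ∧
      (g k x * g h y = g h x * f k y) ∧
      (g h x * f k y = g k x * f h y) ∧
      (f k x * f h y = f h x * f k y) ∧
      (f k x * g h y = f h x * g k y) := by
  intro h k x y
  refine ⟨?_, ?_, ?_, ?_, ?_, ?_⟩ <;> ext a <;>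
    simp only [Module.End.mul_apply, LinearMap.sub_apply, hf, hg, map_neg, LinearMap.neg_apply,
      neg_neg, sub_neg_eq_add]
  · rw [leib k h a x y]; abel
  · rw [leib k h x a y]; abel
  · have h1 := leib h k x y a
    have h2 := leib k h x a y
    rw [h2, ← add_assoc] at h1
    rw [eq_neg_iff_add_eq_zero]
    exact right_eq_add.mp h1
  · have h1 := leib k h x a y
    have h2 := leib h k x a y
    rw [swap k h x a y, h2, swap h k x y a] at h1
    rw [add_right_cancel h1]
  · rw [swap]
  · rw [swap]
end

section
/- Let L be a Lie-like algebra^{2-nd} induced by a nonempty set S and let (V, {f_k}, {g_k}_{k∈S}) be an ordinary module over L. Define the plus annihilator V^{ann,+} as the subspace of V spanned by all vectors (g_h(x) − f_k(x))(v), and the minus annihilator V^{ann,−} as the subspace spanned by all vectors (f_h(x) − f_k(x))(v) and (g_h(x) − g_k(x))(v), where x ∈ L, v ∈ V, h, k ∈ S. Then V^{ann,+} and V^{ann,−} are both ordinary submodules of V, and V^{ann,−} ⊆ V^{ann,+}. -/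
/-- The plus annihilator of an ordinary module `(V, {f_k}, {g_k})` over a
Lie-like algebra^{2-nd}: the subspace spanned by all `(g_h(x) − f_k(x))(v)`. -/
def modAnnPlus2 (K : Type*) [Field K] {L : Type*} [AddCommGroup L] [Module K L]
    {V : Type*} [AddCommGroup V] [Module K V]
    {S : Type*} (f g : S → L →ₗ[K] Module.End K V) : Submodule K V :=
  Submodule.span K {w : V | ∃ x : L, ∃ v : V, ∃ h k : S, w = (g h x - f k x) v}

/-- The minus annihilator of an ordinary module `(V, {f_k}, {g_k})` over a
Lie-like algebra^{2-nd}: the subspace spanned by all `(f_h(x) − f_k(x))(v)` and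
`(g_h(x) − g_k(x))(v)`. -/
def modAnnMinus2 (K : Type*) [Field K] {L : Type*} [AddCommGroup L] [Module K L]
    {V : Type*} [AddCommGroup V] [Module K V]
    {S : Type*} (f g : S → L →ₗ[K] Module.End K V) : Submodule K V :=
  Submodule.span K ({w : V | ∃ x : L, ∃ v : V, ∃ h k : S, w = (f h x - f k x) v} ∪
    {w : V | ∃ x : L, ∃ v : V, ∃ h k : S, w = (g h x - g k x) v})

/-- Both the plus annihilator `V^{ann,+}` and the minus
annihilator `V^{ann,−}` of an ordinary module over a Lie-like algebra^{2-nd}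
are ordinary submodules, and `V^{ann,−} ⊆ V^{ann,+}`. -/
theorem stmt_11 (K : Type*) [Field K] (L : Type*) [AddCommGroup L] [Module K L]
    (S : Type*) [Nonempty S]
    (ang : S → L →ₗ[K] L →ₗ[K] L)
    (leib : ∀ (h k : S) (x y z : L),
      ang h (ang k x y) z = ang k x (ang h y z) + ang k (ang h x z) y)
    (swap : ∀ (h k : S) (x y z : L),
      ang h (ang k x y) z = ang k (ang h x y) z)
    (V : Type*) [AddCommGroup V] [Module K V]
    (f g : S → L →ₗ[K] Module.End K V)
    (hm1 : ∀ (h k : S) (x y : L), f h (ang k x y) = f h x * f k y - f k y * f h x)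
    (hm2 : ∀ (h k : S) (x y : L), g h (ang k x y) = g h x * f k y - f k y * g h x)
    (hm3 : ∀ (h k : S) (x y : L), g k x * g h y = g h x * f k y)
    (hm3' : ∀ (h k : S) (x y : L), g h x * f k y = g k x * f h y)
    (hm4 : ∀ (h k : S) (x y : L), f k x * f h y = f h x * f k y)
    (hm5 : ∀ (h k : S) (x y : L), f k x * g h y = f h x * g k y) :
    (∀ (s : S) (x : L) (v : V), v ∈ modAnnPlus2 K f g →
      f s x v ∈ modAnnPlus2 K f g ∧ g s x v ∈ modAnnPlus2 K f g) ∧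
    (∀ (s : S) (x : L) (v : V), v ∈ modAnnMinus2 K f g →
      f s x v ∈ modAnnMinus2 K f g ∧ g s x v ∈ modAnnMinus2 K f g) ∧
    modAnnMinus2 K f g ≤ modAnnPlus2 K f g := by
  have P : ∀ x v h k, g h x v - f k x v ∈ modAnnPlus2 K f g := fun x v h k =>
    Submodule.subset_span ⟨x, v, h, k, by simp⟩
  have M1 : ∀ x v h k, f h x v - f k x v ∈ modAnnMinus2 K f g := fun x v h k =>
    Submodule.subset_span (Or.inl ⟨x, v, h, k, by simp⟩)
  have M2 : ∀ x v h k, g h x v - g k x v ∈ modAnnMinus2 K f g := fun x v h k =>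
    Submodule.subset_span (Or.inr ⟨x, v, h, k, by simp⟩)
  have e1 : ∀ s h x y v, f s x (f h y v) = f h y (f s x v) - f h (ang s y x) v := by
    intro s h x y v
    rw [hm1]; simp
  have e2 : ∀ s h x y v, f s x (g h y v) = g h y (f s x v) - g h (ang s y x) v := by
    intro s h x y v
    rw [hm2]; simp
  have e3 : ∀ s h x y v, g s x (f h y v) = g h x (f s y v) := fun s h x y v =>
    LinearMap.congr_fun (hm3' s h x y) v
  have e4 : ∀ s h x y v, g s x (g h y v) = g h x (f s y v) := fun s h x y v =>
    LinearMap.congr_fun (hm3 h s x y) v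
  have PF : ∀ (s : S) (x : L), modAnnPlus2 K f g ≤ (modAnnPlus2 K f g).comap (f s x) := by
    intro s x
    refine Submodule.span_le.2 ?_
    rintro _ ⟨y, v, h, k, rfl⟩
    change f s x ((g h y - f k y) v) ∈ modAnnPlus2 K f g
    rw [LinearMap.sub_apply, map_sub, e1, e2, sub_sub_sub_comm]
    exact sub_mem (P _ _ _ _) (P _ _ _ _)
  have MF : ∀ (s : S) (x : L), modAnnMinus2 K f g ≤ (modAnnMinus2 K f g).comap (f s x) := by
    intro s x
    refine Submodule.span_le.2 ?_
    rintro _ (⟨y, v, h, k, rfl⟩ | ⟨y, v, h, k, rfl⟩)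
    · change f s x ((f h y - f k y) v) ∈ modAnnMinus2 K f g
      rw [LinearMap.sub_apply, map_sub, e1, e1 s k, sub_sub_sub_comm]
      exact sub_mem (M1 _ _ _ _) (M1 _ _ _ _)
    · change f s x ((g h y - g k y) v) ∈ modAnnMinus2 K f g
      rw [LinearMap.sub_apply, map_sub, e2, e2 s k, sub_sub_sub_comm]
      exact sub_mem (M2 _ _ _ _) (M2 _ _ _ _)
  have MG : ∀ (s : S) (x : L), modAnnMinus2 K f g ≤ (modAnnMinus2 K f g).comap (g s x) := by
    intro s x
    refine Submodule.span_le.2 ?_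
    rintro _ (⟨y, v, h, k, rfl⟩ | ⟨y, v, h, k, rfl⟩)
    · change g s x ((f h y - f k y) v) ∈ modAnnMinus2 K f g
      rw [LinearMap.sub_apply, map_sub, e3, e3 s k]
      exact M2 _ _ _ _
    · change g s x ((g h y - g k y) v) ∈ modAnnMinus2 K f g
      rw [LinearMap.sub_apply, map_sub, e4, e4 s k]
      exact M2 _ _ _ _
  refine ⟨fun s x v hv => ⟨PF s x hv, ?_⟩, fun s x v hv => ⟨MF s x hv, MG s x hv⟩, ?_⟩
  · have := add_mem (P x v s s) (PF s x hv)
    simpa using this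
  · refine Submodule.span_le.2 ?_
    rintro _ (⟨y, v, h, k, rfl⟩ | ⟨y, v, h, k, rfl⟩)
    · have := sub_mem (P y v h k) (P y v h h)
      simpa using this
    · have := sub_mem (P y v h h) (P y v k h)
      simpa using this
end

section
/- Let L = L₀ ⊕ L₁ be a Lie-like superalgebra^{1-st} induced by a nonempty set S, and let L^{sann} be its super annihilator, i.e. the subspace spanned by all elements [x,y]_h − [x,y]_k with x ∈ L_α, y ∈ L_β homogeneous (α, β ∈ Z₂) and h, k ∈ S. Then L^{sann} is a graded ideal of L: it is a graded subspace (L^{sann} = (L^{sann} ∩ L₀) ⊕ (L^{sann} ∩ L₁)) and [x, a]_s ∈ L^{sann} for all x ∈ L, a ∈ L^{sann} and s ∈ S. -/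
/-- The super annihilator of a Lie-like superalgebra^{1-st}: the subspace
spanned by all `[x,y]_h − [x,y]_k` with `x, y` homogeneous and `h, k ∈ S`. -/
def superAnn1 (K : Type*) [Field K] {L : Type*} [AddCommGroup L] [Module K L]
    {S : Type*} (Lg : ZMod 2 → Submodule K L)
    (br : S → L →ₗ[K] L →ₗ[K] L) : Submodule K L :=
  Submodule.span K {a : L | ∃ α β : ZMod 2, ∃ h k : S,
    ∃ x ∈ Lg α, ∃ y ∈ Lg β, a = br h x y - br k x y}

/-- The super annihilator of a Lie-like superalgebra^{1-st} is a
graded ideal: it is a graded subspace and `[x, a]_s ∈ L^{sann}` for all `x ∈ L`,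
`a ∈ L^{sann}` and `s ∈ S`. -/
theorem stmt_12 (K : Type*) [Field K] (L : Type*) [AddCommGroup L] [Module K L]
    (S : Type*) [Nonempty S]
    (Lg : ZMod 2 → Submodule K L) (hdec : IsCompl (Lg 0) (Lg 1))
    (br : S → L →ₗ[K] L →ₗ[K] L)
    (hgrade : ∀ (k : S) (α β : ZMod 2), ∀ x ∈ Lg α, ∀ y ∈ Lg β,
      br k x y ∈ Lg (α + β))
    (hanti : ∀ (k : S) (α β : ZMod 2), ∀ x ∈ Lg α, ∀ y ∈ Lg β,
      br k x y = - ((-1 : K) ^ (α.val * β.val)) • br k y x)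
    (hjac : ∀ (h k : S) (α β γ : ZMod 2), ∀ x ∈ Lg α, ∀ y ∈ Lg β, ∀ z ∈ Lg γ,
      br k (br h x y) z
        = br h x (br k y z) + ((-1 : K) ^ (β.val * γ.val)) • br k (br h x z) y) :
    (superAnn1 K Lg br
      = (superAnn1 K Lg br ⊓ Lg 0) ⊔ (superAnn1 K Lg br ⊓ Lg 1)) ∧
    (∀ (x : L) (a : L) (s : S), a ∈ superAnn1 K Lg br →
      br s x a ∈ superAnn1 K Lg br) := by
  have gen : ∀ (α β : ZMod 2) (h k : S), ∀ x ∈ Lg α, ∀ y ∈ Lg β,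
      br h x y - br k x y ∈ superAnn1 K Lg br := fun α β h k x hx y hy =>
    Submodule.subset_span ⟨α, β, h, k, x, hx, y, hy, rfl⟩
  constructor
  · apply le_antisymm
    · refine Submodule.span_le.mpr ?_
      rintro a ⟨α, β, h, k, x, hx, y, hy, rfl⟩
      have h1 := gen α β h k x hx y hy
      have h2 : br h x y - br k x y ∈ Lg (α + β) :=
        Submodule.sub_mem _ (hgrade h α β x hx y hy) (hgrade k α β x hx y hy)
      have h3 : ∀ g : ZMod 2, g = 0 ∨ g = 1 := by decide
      rcases h3 (α + β) with h0 | h0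
      · rw [h0] at h2
        exact Submodule.mem_sup_left ⟨h1, h2⟩
      · rw [h0] at h2
        exact Submodule.mem_sup_right ⟨h1, h2⟩
    · exact sup_le inf_le_left inf_le_left
  · have key : ∀ (δ : ZMod 2), ∀ w ∈ Lg δ, ∀ (s : S), ∀ a ∈ superAnn1 K Lg br,
        br s w a ∈ superAnn1 K Lg br := by
      intro δ w hw s a ha
      have hle : superAnn1 K Lg br ≤ (superAnn1 K Lg br).comap (br s w) := by
        refine Submodule.span_le.mpr ?_
        rintro a ⟨α, β, h, k, x, hx, y, hy, rfl⟩
        change br s w (br h x y - br k x y) ∈ superAnn1 K Lg br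
        have e1 := hjac s h δ α β w hw x hx y hy
        have e2 := hjac s k δ α β w hw x hx y hy
        have e : br s w (br h x y - br k x y)
            = (br h (br s w x) y - br k (br s w x) y)
              - ((-1 : K) ^ (α.val * β.val)) • (br h (br s w y) x - br k (br s w y) x) := by
          rw [map_sub, e1, e2, smul_sub]
          abel
        rw [e]
        exact Submodule.sub_mem _
          (gen _ _ h k _ (hgrade s _ _ w hw x hx) y hy)
          (Submodule.smul_mem _ _ (gen _ _ h k _ (hgrade s _ _ w hw y hy) x hx))
      exact hle ha
    intro x a s ha
    have hx : x ∈ Lg 0 ⊔ Lg 1 := by rw [hdec.sup_eq_top]; trivial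
    obtain ⟨u, hu, v, hv, rfl⟩ := Submodule.mem_sup.mp hx
    rw [map_add, LinearMap.add_apply]
    exact Submodule.add_mem _ (key 0 u hu s a ha) (key 1 v hv s a ha)
end

section
/- Let L = L₀ ⊕ L₁ be a Lie-like superalgebra^{1-st} induced by a nonempty set S with super annihilator L^{sann}. Then on the quotient vector space L/L^{sann}, graded by the images of L₀ and L₁, there is a well-defined bilinear bracket [x + L^{sann}, y + L^{sann}] := [x,y]_k + L^{sann} for any k ∈ S (independent of the choice of k), and with this bracket L/L^{sann} is a Lie superalgebra: the bracket respects the grading, is super anti-symmetric on homogeneous classes ([u,v] = −(−1)^{αβ}[v,u] for u of degree α and v of degree β), and satisfies the super Jacobi identity [[u,v], w] = [u, [v,w]] + (−1)^{βγ}[[u,w], v] for homogeneous u, v, w of degrees α, β, γ. -/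
/-- On `L / L^{sann}`, graded by the images of `L₀` and `L₁`,
there is a well-defined bilinear bracket `[x̄, ȳ] = [x,y]_k + L^{sann}`
(independent of `k ∈ S`) making the quotient a Lie superalgebra: the bracket
respects the grading, is super anti-symmetric on homogeneous classes, and
satisfies the super Jacobi identity on homogeneous classes. -/
theorem stmt_13 (K : Type*) [Field K] (L : Type*) [AddCommGroup L] [Module K L]
    (S : Type*) [Nonempty S]
    (Lg : ZMod 2 → Submodule K L) (hdec : IsCompl (Lg 0) (Lg 1))
    (br : S → L →ₗ[K] L →ₗ[K] L)
    (hgrade : ∀ (k : S) (α β : ZMod 2), ∀ x ∈ Lg α, ∀ y ∈ Lg β,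
      br k x y ∈ Lg (α + β))
    (hanti : ∀ (k : S) (α β : ZMod 2), ∀ x ∈ Lg α, ∀ y ∈ Lg β,
      br k x y = - ((-1 : K) ^ (α.val * β.val)) • br k y x)
    (hjac : ∀ (h k : S) (α β γ : ZMod 2), ∀ x ∈ Lg α, ∀ y ∈ Lg β, ∀ z ∈ Lg γ,
      br k (br h x y) z
        = br h x (br k y z) + ((-1 : K) ^ (β.val * γ.val)) • br k (br h x z) y) :
    ∃ qbr : (L ⧸ superAnn1 K Lg br) →ₗ[K] (L ⧸ superAnn1 K Lg br) →ₗ[K]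
        (L ⧸ superAnn1 K Lg br),
      (∀ (k : S) (x y : L),
        qbr (Submodule.Quotient.mk x) (Submodule.Quotient.mk y)
          = Submodule.Quotient.mk (br k x y)) ∧
      (∀ (α β : ZMod 2),
        ∀ u ∈ (Lg α).map (superAnn1 K Lg br).mkQ,
        ∀ v ∈ (Lg β).map (superAnn1 K Lg br).mkQ,
          qbr u v ∈ (Lg (α + β)).map (superAnn1 K Lg br).mkQ) ∧
      (∀ (α β : ZMod 2),
        ∀ u ∈ (Lg α).map (superAnn1 K Lg br).mkQ,
        ∀ v ∈ (Lg β).map (superAnn1 K Lg br).mkQ,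
          qbr u v = - ((-1 : K) ^ (α.val * β.val)) • qbr v u) ∧
      (∀ (α β γ : ZMod 2),
        ∀ u ∈ (Lg α).map (superAnn1 K Lg br).mkQ,
        ∀ v ∈ (Lg β).map (superAnn1 K Lg br).mkQ,
        ∀ w ∈ (Lg γ).map (superAnn1 K Lg br).mkQ,
          qbr (qbr u v) w
            = qbr u (qbr v w) + ((-1 : K) ^ (β.val * γ.val)) • qbr (qbr u w) v) := by
  classical
  set A := superAnn1 K Lg br with hA
  have hgen : ∀ (α β : ZMod 2) (h k : S), ∀ x ∈ Lg α, ∀ y ∈ Lg β,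
      br h x y - br k x y ∈ A := by
    intro α β h k x hx y hy
    exact Submodule.subset_span ⟨α, β, h, k, x, hx, y, hy, rfl⟩
  have hsplit : ∀ x : L, ∃ a ∈ Lg 0, ∃ b ∈ Lg 1, a + b = x := by
    intro x
    have hx : x ∈ Lg 0 ⊔ Lg 1 := by rw [hdec.sup_eq_top]; trivial
    exact Submodule.mem_sup.mp hx
  have hdiff : ∀ (h k : S) (x y : L), br h x y - br k x y ∈ A := by
    intro h k x y
    obtain ⟨a, ha, b, hb, rfl⟩ := hsplit x
    obtain ⟨c, hc, d, hd, rfl⟩ := hsplit y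
    have e : br h (a + b) (c + d) - br k (a + b) (c + d)
        = (br h a c - br k a c) + (br h a d - br k a d)
          + (br h b c - br k b c) + (br h b d - br k b d) := by
      simp only [map_add, LinearMap.add_apply]; abel
    rw [e]
    exact A.add_mem (A.add_mem (A.add_mem (hgen _ _ h k a ha c hc) (hgen _ _ h k a ha d hd))
      (hgen _ _ h k b hb c hc)) (hgen _ _ h k b hb d hd)
  have hR0 : ∀ (l h k : S) (α β γ : ZMod 2), ∀ x ∈ Lg α, ∀ y ∈ Lg β, ∀ z ∈ Lg γ,
      br l x (br h y z - br k y z) ∈ A := by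
    intro l h k α β γ x hx y hy z hz
    have e : br l x (br h y z - br k y z)
        = (br h (br l x y) z - br k (br l x y) z)
          - ((-1 : K) ^ (β.val * γ.val)) • (br h (br l x z) y - br k (br l x z) y) := by
      rw [hjac l h α β γ x hx y hy z hz, hjac l k α β γ x hx y hy z hz, map_sub, smul_sub]
      abel
    rw [e]
    exact A.sub_mem (hdiff _ _ _ _) (A.smul_mem _ (hdiff _ _ _ _))
  have hR : ∀ (l : S) (x : L), ∀ a ∈ A, br l x a ∈ A := by
    intro l x a ha
    have : A ≤ A.comap (br l x) := by
      rw [hA, superAnn1, Submodule.span_le, ← superAnn1, ← hA]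
      rintro _ ⟨β, γ, h, k, y, hy, z, hz, rfl⟩
      obtain ⟨c, hc, d, hd, rfl⟩ := hsplit x
      change br l (c + d) _ ∈ A
      rw [map_add, LinearMap.add_apply]
      exact A.add_mem (hR0 l h k _ _ _ c hc y hy z hz) (hR0 l h k _ _ _ d hd y hy z hz)
    exact this ha
  have hL : ∀ (l : S) (x : L), ∀ a ∈ A, br l a x ∈ A := by
    intro l x a ha
    have : A ≤ A.comap ((br l).flip x) := by
      rw [hA, superAnn1, Submodule.span_le, ← superAnn1, ← hA]
      rintro _ ⟨β, γ, h, k, y, hy, z, hz, rfl⟩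
      obtain ⟨c, hc, d, hd, rfl⟩ := hsplit x
      change br l _ (c + d) ∈ A
      have hm : br h y z - br k y z ∈ Lg (β + γ) :=
        (Lg _).sub_mem (hgrade h _ _ y hy z hz) (hgrade k _ _ y hy z hz)
      rw [map_add, hanti l _ _ _ hm c hc, hanti l _ _ _ hm d hd]
      exact A.add_mem (A.smul_mem _ (hR0 l h k _ _ _ c hc y hy z hz))
        (A.smul_mem _ (hR0 l h k _ _ _ d hd y hy z hz))
    exact this ha
  obtain ⟨k₀⟩ := ‹Nonempty S›
  let q1 : L →ₗ[K] (L ⧸ A) →ₗ[K] (L ⧸ A) :=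
    { toFun := fun x => A.mapQ A (br k₀ x) (fun a ha => hR k₀ x a ha)
      map_add' := by
        intro x y
        refine LinearMap.ext fun u => ?_
        obtain ⟨z, rfl⟩ := A.mkQ_surjective u
        simp
      map_smul' := by
        intro c x
        refine LinearMap.ext fun u => ?_
        obtain ⟨z, rfl⟩ := A.mkQ_surjective u
        simp }
  let qbr : (L ⧸ A) →ₗ[K] (L ⧸ A) →ₗ[K] (L ⧸ A) := A.liftQ q1 (by
    intro a ha
    rw [LinearMap.mem_ker]
    refine LinearMap.ext fun u => ?_
    obtain ⟨z, rfl⟩ := A.mkQ_surjective u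
    exact (Submodule.Quotient.mk_eq_zero A).mpr (hL k₀ z a ha))
  have hq0 : ∀ x y : L, qbr (A.mkQ x) (A.mkQ y) = A.mkQ (br k₀ x y) := fun x y => rfl
  refine ⟨qbr, ?_, ?_, ?_, ?_⟩
  · intro k x y
    exact (Submodule.Quotient.eq A).mpr (hdiff k₀ k x y)
  · rintro α β _ ⟨x, hx, rfl⟩ _ ⟨y, hy, rfl⟩
    exact ⟨br k₀ x y, hgrade k₀ _ _ x hx y hy, rfl⟩
  · rintro α β _ ⟨x, hx, rfl⟩ _ ⟨y, hy, rfl⟩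
    rw [hq0, hq0, hanti k₀ _ _ x hx y hy, map_smul]
  · rintro α β γ _ ⟨x, hx, rfl⟩ _ ⟨y, hy, rfl⟩ _ ⟨z, hz, rfl⟩
    simp only [hq0]
    rw [hjac k₀ k₀ _ _ _ x hx y hy z hz, map_add, map_smul]
end

section
/- Let L = L₀ ⊕ L₁ be a Lie-like superalgebra^{1-st} induced by a nonempty set S. Then the even part L₀, with the restricted brackets [·,·]_k (k ∈ S), is a Lie-like algebra^{1-st} induced by S (the brackets map L₀ × L₀ into L₀, are anti-symmetric, and satisfy the Jacobi-like identity^{1-st}: [[x,y]_h, z]_k + [[y,z]_k, x]_h + [[z,x]_h, y]_k = 0 for x, y, z ∈ L₀ and h, k ∈ S), and the odd part L₁ is an ordinary module over L₀ via the maps f_k(x)(v) := [x, v]_k for x ∈ L₀, v ∈ L₁: f_h([x,y]_k) = f_h(x)∘f_k(y) − f_h(y)∘f_k(x) and f_k(x)∘f_h(y) = f_h(x)∘f_k(y) for all x, y ∈ L₀ and h, k ∈ S. -/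
/-- For a Lie-like superalgebra^{1-st} `L = L₀ ⊕ L₁` induced by
`S`, the even part `L₀` with the restricted brackets is a Lie-like
algebra^{1-st} induced by `S`, and the odd part `L₁` is an ordinary module over
`L₀` via `f_k(x)(v) := [x, v]_k`. -/
theorem stmt_14 (K : Type*) [Field K] (L : Type*) [AddCommGroup L] [Module K L]
    (S : Type*) [Nonempty S]
    (Lg : ZMod 2 → Submodule K L) (hdec : IsCompl (Lg 0) (Lg 1))
    (br : S → L →ₗ[K] L →ₗ[K] L)
    (hgrade : ∀ (k : S) (α β : ZMod 2), ∀ x ∈ Lg α, ∀ y ∈ Lg β,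
      br k x y ∈ Lg (α + β))
    (hanti : ∀ (k : S) (α β : ZMod 2), ∀ x ∈ Lg α, ∀ y ∈ Lg β,
      br k x y = - ((-1 : K) ^ (α.val * β.val)) • br k y x)
    (hjac : ∀ (h k : S) (α β γ : ZMod 2), ∀ x ∈ Lg α, ∀ y ∈ Lg β, ∀ z ∈ Lg γ,
      br k (br h x y) z
        = br h x (br k y z) + ((-1 : K) ^ (β.val * γ.val)) • br k (br h x z) y) :
    -- `L₀` is closed under every bracket
    (∀ (k : S), ∀ x ∈ Lg 0, ∀ y ∈ Lg 0, br k x y ∈ Lg 0) ∧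
    -- each bracket is anti-symmetric on `L₀`
    (∀ (k : S), ∀ x ∈ Lg 0, ∀ y ∈ Lg 0, br k x y = - br k y x) ∧
    -- the Jacobi-like identity^{1-st} holds on `L₀`
    (∀ (h k : S), ∀ x ∈ Lg 0, ∀ y ∈ Lg 0, ∀ z ∈ Lg 0,
      br k (br h x y) z + br h (br k y z) x + br k (br h z x) y = 0) ∧
    -- `L₁` is stable under `f_k(x) = [x, ·]_k` for `x ∈ L₀`
    (∀ (k : S), ∀ x ∈ Lg 0, ∀ v ∈ Lg 1, br k x v ∈ Lg 1) ∧
    -- first ordinary-module identity on `L₁`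
    (∀ (h k : S), ∀ x ∈ Lg 0, ∀ y ∈ Lg 0, ∀ v ∈ Lg 1,
      br h (br k x y) v = br h x (br k y v) - br h y (br k x v)) ∧
    -- second ordinary-module identity on `L₁`
    (∀ (h k : S), ∀ x ∈ Lg 0, ∀ y ∈ Lg 0, ∀ v ∈ Lg 1,
      br k x (br h y v) = br h x (br k y v)) := by
  have a00 : ∀ (k : S), ∀ x ∈ Lg 0, ∀ y ∈ Lg 0, br k x y = - br k y x := by
    intro k x hx y hy
    simpa using hanti k 0 0 x hx y hy
  have a01 : ∀ (k : S), ∀ x ∈ Lg 0, ∀ y ∈ Lg 1, br k y x = - br k x y := by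
    intro k x hx y hy
    simpa using hanti k 1 0 y hy x hx
  have g00 : ∀ (k : S), ∀ x ∈ Lg 0, ∀ y ∈ Lg 0, br k x y ∈ Lg 0 := by
    intro k x hx y hy
    simpa using hgrade k 0 0 x hx y hy
  have g01 : ∀ (k : S), ∀ x ∈ Lg 0, ∀ y ∈ Lg 1, br k x y ∈ Lg 1 := by
    intro k x hx y hy
    simpa using hgrade k 0 1 x hx y hy
  have j1 : ∀ (h k : S), ∀ x ∈ Lg 0, ∀ y ∈ Lg 0, ∀ v ∈ Lg 1,
      br k (br h x y) v = br h x (br k y v) - br k y (br h x v) := by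
    intro h k x hx y hy v hv
    have e := hjac h k 0 0 1 x hx y hy v hv
    rw [a01 k y hy _ (g01 h x hx v hv)] at e
    simpa [sub_eq_add_neg] using e
  have j2 : ∀ (h k : S), ∀ x ∈ Lg 0, ∀ y ∈ Lg 0, ∀ v ∈ Lg 1,
      br h (br k x y) v = br k x (br h y v) - br k y (br h x v) := by
    intro h k x hx y hy v hv
    have e := hjac h k 1 0 0 v hv x hx y hy
    rw [a01 h _ (g00 k x hx y hy) v hv, a01 h x hx v hv, a01 h y hy v hv] at e
    simp only [map_neg, LinearMap.neg_apply] at e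
    rw [a01 k y hy _ (g01 h x hx v hv), a01 k x hx _ (g01 h y hy v hv)] at e
    simp only [ZMod.val_zero, mul_zero, pow_zero, one_smul, neg_neg] at e
    rw [e]; abel
  have m2 : ∀ (h k : S), ∀ x ∈ Lg 0, ∀ y ∈ Lg 0, ∀ v ∈ Lg 1,
      br k x (br h y v) = br h x (br k y v) := by
    intro h k x hx y hy v hv
    have e := (j1 k h y hy x hx v hv).symm.trans (j2 h k y hy x hx v hv)
    exact (sub_right_injective e).symm
  refine ⟨g00, a00, ?_, g01, ?_, m2⟩
  · intro h k x hx y hy z hz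
    have e := hjac h k 0 0 0 x hx y hy z hz
    rw [a00 h _ (g00 k y hy z hz) x hx, a00 h z hz x hx, e]
    simp
  · intro h k x hx y hy v hv
    rw [j1 k h x hx y hy v hv, m2 h k x hx y hy v hv]
end

section
/- Let L = L₀ ⊕ L₁ be a Lie-like superalgebra^{1-st} induced by a nonempty set S. For k ∈ S define ad_k : L → End(L) by ad_k(x)(a) := [x, a]_k. Then for all homogeneous x ∈ L_α, y ∈ L_β (α, β ∈ Z₂) and all h, k ∈ S: ad_h([x,y]_k) = ad_h(x)∘ad_k(y) − (−1)^{αβ} ad_h(y)∘ad_k(x), and ad_k(x)∘ad_h(y) = ad_h(x)∘ad_k(y); that is, (L, {ad_k}_{k∈S}) is an ordinary module over L. -/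
/-- For a Lie-like superalgebra^{1-st} `L` induced by `S`, the
adjoint maps `ad_k(x) = [x, ·]_k` make `(L, {ad_k})` an ordinary module over
`L`: for homogeneous `x ∈ L_α`, `y ∈ L_β` and `h, k ∈ S`,
`ad_h([x,y]_k) = ad_h(x)∘ad_k(y) − (−1)^{αβ} ad_h(y)∘ad_k(x)` and
`ad_k(x)∘ad_h(y) = ad_h(x)∘ad_k(y)`. -/
theorem stmt_15 (K : Type*) [Field K] (L : Type*) [AddCommGroup L] [Module K L]
    (S : Type*) [Nonempty S]
    (Lg : ZMod 2 → Submodule K L) (hdec : IsCompl (Lg 0) (Lg 1))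
    (br : S → L →ₗ[K] L →ₗ[K] L)
    (hgrade : ∀ (k : S) (α β : ZMod 2), ∀ x ∈ Lg α, ∀ y ∈ Lg β,
      br k x y ∈ Lg (α + β))
    (hanti : ∀ (k : S) (α β : ZMod 2), ∀ x ∈ Lg α, ∀ y ∈ Lg β,
      br k x y = - ((-1 : K) ^ (α.val * β.val)) • br k y x)
    (hjac : ∀ (h k : S) (α β γ : ZMod 2), ∀ x ∈ Lg α, ∀ y ∈ Lg β, ∀ z ∈ Lg γ,
      br k (br h x y) z
        = br h x (br k y z) + ((-1 : K) ^ (β.val * γ.val)) • br k (br h x z) y) :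
    ∀ (h k : S) (α β : ZMod 2), ∀ x ∈ Lg α, ∀ y ∈ Lg β,
      (br h (br k x y)
        = br h x ∘ₗ br k y - ((-1 : K) ^ (α.val * β.val)) • (br h y ∘ₗ br k x)) ∧
      (br k x ∘ₗ br h y = br h x ∘ₗ br k y) := by
  have ext2 : ∀ f g : L →ₗ[K] L, (∀ γ : ZMod 2, ∀ z ∈ Lg γ, f z = g z) → f = g := by
    intro f g hfg
    ext v
    have hv : v ∈ Lg 0 ⊔ Lg 1 := by rw [hdec.sup_eq_top]; trivial
    obtain ⟨a, ha, b, hb, rfl⟩ := Submodule.mem_sup.1 hv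
    rw [map_add, map_add, hfg 0 a ha, hfg 1 b hb]
  have two : ∀ α : ZMod 2, α = 0 ∨ α = 1 := by decide
  have v0 : (0 : ZMod 2).val = 0 := rfl
  have v1 : (1 : ZMod 2).val = 1 := rfl
  have v2 : (1 + 1 : ZMod 2).val = 0 := rfl
  have key : ∀ (h k : S) (α β γ : ZMod 2), ∀ x ∈ Lg α, ∀ y ∈ Lg β, ∀ z ∈ Lg γ,
      br k x (br h y z) = br h x (br k y z) := by
    intro h k α β γ x hx y hy z hz
    have j1 := hjac k h β γ α y hy z hz x hx
    have j2 := hjac h k γ α β z hz x hx y hy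
    have a1 := hanti h _ _ _ (hgrade k _ _ y hy z hz) x hx
    have a2 := hanti k _ _ _ (hgrade h _ _ z hz x hx) y hy
    have a3 := hanti h _ _ _ (hgrade k _ _ y hy x hx) z hz
    have a4 := hanti k _ _ _ (hgrade h _ _ z hz y hy) x hx
    rw [a1, a3, hanti k _ _ y hy x hx] at j1
    rw [a2, a4, hanti h _ _ z hz y hy] at j2
    clear a1 a2 a3 a4
    rcases two α with rfl | rfl <;> rcases two β with rfl | rfl <;>
      rcases two γ with rfl | rfl <;>
      simp only [v0, v1, v2, add_zero, zero_add, mul_zero, zero_mul, mul_one, pow_zero, pow_one,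
        neg_neg, neg_smul, one_smul, map_neg] at j1 j2 <;>
      grind
  intro h k α β x hx y hy
  refine ⟨ext2 _ _ ?_, ext2 _ _ ?_⟩
  · intro γ z hz
    have j := hjac k h α β γ x hx y hy z hz
    rw [key h k α β γ x hx y hy z hz, hanti h _ _ _ (hgrade k _ _ x hx z hz) y hy] at j
    simp only [LinearMap.sub_apply, LinearMap.smul_apply, LinearMap.comp_apply]
    rw [j]
    rcases two α with rfl | rfl <;> rcases two β with rfl | rfl <;>
      rcases two γ with rfl | rfl <;>
      simp [v0, v1, v2, sub_eq_add_neg]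
  · intro γ z hz
    exact key h k α β γ x hx y hy z hz
end

section
/- Let L = L₀ ⊕ L₁ be a Lie-like superalgebra^{1-st} induced by a nonempty set S and let (V = V₀ ⊕ V₁, {f_k}_{k∈S}) be an ordinary module over L. Then the super annihilator V^{sann}, i.e. the subspace of V spanned by all vectors (f_h(x) − f_k(x))(v) with x ∈ L homogeneous, v ∈ V homogeneous and h, k ∈ S, is an ordinary submodule of V: f_s(x)(V^{sann}) ⊆ V^{sann} for all x ∈ L and s ∈ S. -/
/-- The super annihilator of an ordinary module `(V = V₀ ⊕ V₁, {f_k})` over a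
Lie-like superalgebra^{1-st}: the subspace spanned by all
`(f_h(x) − f_k(x))(v)` with `x ∈ L`, `v ∈ V` homogeneous and `h, k ∈ S`. -/
def superModAnn1 (K : Type*) [Field K] {L : Type*} [AddCommGroup L] [Module K L]
    {V : Type*} [AddCommGroup V] [Module K V]
    {S : Type*} (Lg : ZMod 2 → Submodule K L) (Vg : ZMod 2 → Submodule K V)
    (f : S → L →ₗ[K] Module.End K V) : Submodule K V :=
  Submodule.span K {w : V | ∃ α β : ZMod 2, ∃ h k : S,
    ∃ x ∈ Lg α, ∃ v ∈ Vg β, w = (f h x - f k x) v}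

/-- The super annihilator of an ordinary module over a Lie-like
superalgebra^{1-st} is an ordinary submodule:
`f_s(x)(V^{sann}) ⊆ V^{sann}` for all `x ∈ L` and `s ∈ S`. -/
theorem stmt_16 (K : Type*) [Field K] (L : Type*) [AddCommGroup L] [Module K L]
    (S : Type*) [Nonempty S]
    (Lg : ZMod 2 → Submodule K L) (hdec : IsCompl (Lg 0) (Lg 1))
    (br : S → L →ₗ[K] L →ₗ[K] L)
    (hgrade : ∀ (k : S) (α β : ZMod 2), ∀ x ∈ Lg α, ∀ y ∈ Lg β,
      br k x y ∈ Lg (α + β))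
    (hanti : ∀ (k : S) (α β : ZMod 2), ∀ x ∈ Lg α, ∀ y ∈ Lg β,
      br k x y = - ((-1 : K) ^ (α.val * β.val)) • br k y x)
    (hjac : ∀ (h k : S) (α β γ : ZMod 2), ∀ x ∈ Lg α, ∀ y ∈ Lg β, ∀ z ∈ Lg γ,
      br k (br h x y) z
        = br h x (br k y z) + ((-1 : K) ^ (β.val * γ.val)) • br k (br h x z) y)
    (V : Type*) [AddCommGroup V] [Module K V]
    (Vg : ZMod 2 → Submodule K V) (hVdec : IsCompl (Vg 0) (Vg 1))
    (f : S → L →ₗ[K] Module.End K V)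
    (hmod1 : ∀ (h k : S) (α β : ZMod 2), ∀ x ∈ Lg α, ∀ y ∈ Lg β,
      f h (br k x y)
        = f h x * f k y - ((-1 : K) ^ (α.val * β.val)) • (f h y * f k x))
    (hmod2 : ∀ (h k : S) (α β : ZMod 2), ∀ x ∈ Lg α, ∀ y ∈ Lg β,
      f k x * f h y = f h x * f k y) :
    ∀ (s : S) (x : L) (v : V), v ∈ superModAnn1 K Lg Vg f →
      f s x v ∈ superModAnn1 K Lg Vg f := by
  have hL : ∀ x : L, ∃ a ∈ Lg 0, ∃ b ∈ Lg 1, a + b = x := fun x =>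
    Submodule.mem_sup.mp (hdec.sup_eq_top ▸ Submodule.mem_top)
  have hV : ∀ x : V, ∃ a ∈ Vg 0, ∃ b ∈ Vg 1, a + b = x := fun x =>
    Submodule.mem_sup.mp (hVdec.sup_eq_top ▸ Submodule.mem_top)
  have key : ∀ (h k : S) (α : ZMod 2), ∀ x ∈ Lg α, ∀ v : V,
      (f h x - f k x) v ∈ superModAnn1 K Lg Vg f := by
    intro h k α x hx v
    obtain ⟨a, ha, b, hb, rfl⟩ := hV v
    rw [map_add]
    exact add_mem (Submodule.subset_span ⟨α, 0, h, k, x, hx, a, ha, rfl⟩)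
      (Submodule.subset_span ⟨α, 1, h, k, x, hx, b, hb, rfl⟩)
  have hom : ∀ (s : S) (γ : ZMod 2), ∀ x ∈ Lg γ, ∀ v ∈ superModAnn1 K Lg Vg f,
      f s x v ∈ superModAnn1 K Lg Vg f := by
    intro s γ x hx v hv
    have hle : superModAnn1 K Lg Vg f ≤ (superModAnn1 K Lg Vg f).comap (f s x) := by
      refine Submodule.span_le.mpr ?_
      rintro w ⟨α, β, h, k, y, hy, u, hu, rfl⟩
      have e : f s x ((f h y - f k y) u) = (f h x - f k x) (f s y u) := by
        have e1 := LinearMap.congr_fun (hmod2 h s γ α x hx y hy) u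
        have e2 := LinearMap.congr_fun (hmod2 k s γ α x hx y hy) u
        simp only [Module.End.mul_apply] at e1 e2
        simp only [LinearMap.sub_apply, map_sub, e1, e2]
      change f s x ((f h y - f k y) u) ∈ superModAnn1 K Lg Vg f
      rw [e]
      exact key h k γ x hx _
    exact hle hv
  intro s x v hv
  obtain ⟨a, ha, b, hb, rfl⟩ := hL x
  rw [map_add, LinearMap.add_apply]
  exact add_mem (hom s 0 a ha v hv) (hom s 1 b hb v hv)
end

section
/- Let L = L₀ ⊕ L₁ be a Lie-like superalgebra^{2-nd} induced by a nonempty set S. Define the plus super annihilator L^{sann,+} as the subspace spanned by all elements ⟨x,y⟩_h + (−1)^{αβ}⟨y,x⟩_k with x ∈ L_α, y ∈ L_β homogeneous and h, k ∈ S, and the minus super annihilator L^{sann,−} as the subspace spanned by all elements ⟨x,y⟩_h − ⟨x,y⟩_k with x, y homogeneous and h, k ∈ S. Then L^{sann,+} and L^{sann,−} are both ideals of L (closed under left and right multiplication by ⟨·,·⟩_s for every s ∈ S), and L^{sann,−} ⊆ L^{sann,+}. -/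
/-- The plus super annihilator of a Lie-like superalgebra^{2-nd}: the subspace
spanned by all `⟨x,y⟩_h + (−1)^{αβ}⟨y,x⟩_k` with `x ∈ L_α`, `y ∈ L_β`
homogeneous and `h, k ∈ S`. -/
def superAnnPlus2 (K : Type*) [Field K] {L : Type*} [AddCommGroup L] [Module K L]
    {S : Type*} (Lg : ZMod 2 → Submodule K L)
    (ang : S → L →ₗ[K] L →ₗ[K] L) : Submodule K L :=
  Submodule.span K {a : L | ∃ α β : ZMod 2, ∃ h k : S, ∃ x ∈ Lg α, ∃ y ∈ Lg β,
    a = ang h x y + ((-1 : K) ^ (α.val * β.val)) • ang k y x}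

/-- The minus super annihilator of a Lie-like superalgebra^{2-nd}: the subspace
spanned by all `⟨x,y⟩_h − ⟨x,y⟩_k` with `x, y` homogeneous and `h, k ∈ S`. -/
def superAnnMinus2 (K : Type*) [Field K] {L : Type*} [AddCommGroup L] [Module K L]
    {S : Type*} (Lg : ZMod 2 → Submodule K L)
    (ang : S → L →ₗ[K] L →ₗ[K] L) : Submodule K L :=
  Submodule.span K {a : L | ∃ α β : ZMod 2, ∃ h k : S, ∃ x ∈ Lg α, ∃ y ∈ Lg β,
    a = ang h x y - ang k x y}

/-- The plus and minus super annihilators of a Lie-like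
superalgebra^{2-nd} are both ideals (closed under left and right multiplication
by `⟨·,·⟩_s` for every `s ∈ S`), and `L^{sann,−} ⊆ L^{sann,+}`. -/
theorem stmt_17 (K : Type*) [Field K] (L : Type*) [AddCommGroup L] [Module K L]
    (S : Type*) [Nonempty S]
    (Lg : ZMod 2 → Submodule K L) (hdec : IsCompl (Lg 0) (Lg 1))
    (ang : S → L →ₗ[K] L →ₗ[K] L)
    (hgrade : ∀ (k : S) (α β : ZMod 2), ∀ x ∈ Lg α, ∀ y ∈ Lg β,
      ang k x y ∈ Lg (α + β))
    (hjac : ∀ (h k : S) (α β γ : ZMod 2), ∀ x ∈ Lg α, ∀ y ∈ Lg β, ∀ z ∈ Lg γ,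
      ang k (ang h x y) z
        = ang h x (ang k y z) + ((-1 : K) ^ (β.val * γ.val)) • ang h (ang k x z) y)
    (hswap : ∀ (h k : S) (α β γ : ZMod 2), ∀ x ∈ Lg α, ∀ y ∈ Lg β, ∀ z ∈ Lg γ,
      ang k (ang h x y) z = ang h (ang k x y) z) :
    (∀ (x : L) (a : L) (s : S), a ∈ superAnnPlus2 K Lg ang →
      ang s a x ∈ superAnnPlus2 K Lg ang ∧ ang s x a ∈ superAnnPlus2 K Lg ang) ∧
    (∀ (x : L) (a : L) (s : S), a ∈ superAnnMinus2 K Lg ang →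
      ang s a x ∈ superAnnMinus2 K Lg ang ∧ ang s x a ∈ superAnnMinus2 K Lg ang) ∧
    superAnnMinus2 K Lg ang ≤ superAnnPlus2 K Lg ang := by
  have mgen : ∀ (α β : ZMod 2) (h k : S), ∀ x ∈ Lg α, ∀ y ∈ Lg β,
      ang h x y - ang k x y ∈ superAnnMinus2 K Lg ang := fun α β h k x hx y hy =>
    Submodule.subset_span ⟨α, β, h, k, x, hx, y, hy, rfl⟩
  have pgen : ∀ (α β : ZMod 2) (h k : S), ∀ x ∈ Lg α, ∀ y ∈ Lg β,
      ang h x y + ((-1 : K) ^ (α.val * β.val)) • ang k y x ∈ superAnnPlus2 K Lg ang :=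
    fun α β h k x hx y hy => Submodule.subset_span ⟨α, β, h, k, x, hx, y, hy, rfl⟩
  have hle : superAnnMinus2 K Lg ang ≤ superAnnPlus2 K Lg ang := by
    refine Submodule.span_le.2 ?_
    rintro _ ⟨α, β, h, k, x, hx, y, hy, rfl⟩
    have := Submodule.sub_mem _ (pgen α β h h x hx y hy) (pgen α β k h x hx y hy)
    rwa [add_sub_add_right_eq_sub] at this
  have hleft : ∀ (s h : S) (α β γ : ZMod 2), ∀ x ∈ Lg α, ∀ y ∈ Lg β, ∀ z ∈ Lg γ,
      ang s z (ang h x y) = ang h (ang s z x) y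
        - ((-1 : K) ^ (α.val * β.val)) • ang h (ang s z y) x := by
    intro s h α β γ x hx y hy z hz
    rw [hjac s h γ α β z hz x hx y hy, hswap h s γ β α z hz y hy x hx, add_sub_cancel_right]
  have key : ∀ (I : Submodule K L) (G : Set L), I = Submodule.span K G →
      (∀ a ∈ G, ∀ (γ : ZMod 2), ∀ z ∈ Lg γ, ∀ s, ang s a z ∈ I ∧ ang s z a ∈ I) →
      ∀ (x : L) (a : L) (s : S), a ∈ I → ang s a x ∈ I ∧ ang s x a ∈ I := by
    intro I G hI hG x a s ha
    have hx : x ∈ Lg 0 ⊔ Lg 1 := by rw [hdec.sup_eq_top]; trivial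
    obtain ⟨u, hu, v, hv, rfl⟩ := Submodule.mem_sup.1 hx
    rw [hI] at ha
    induction ha using Submodule.span_induction with
    | mem a ha =>
      have h0 := hG a ha 0 u hu s
      have h1 := hG a ha 1 v hv s
      simp only [map_add, LinearMap.add_apply]
      exact ⟨I.add_mem h0.1 h1.1, I.add_mem h0.2 h1.2⟩
    | zero => simp
    | add a b _ _ iha ihb =>
      rw [map_add (ang s) a b, map_add (ang s (u + v)) a b, LinearMap.add_apply]
      exact ⟨I.add_mem iha.1 ihb.1, I.add_mem iha.2 ihb.2⟩
    | smul c a _ iha =>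
      rw [map_smul (ang s) c a, map_smul (ang s (u + v)) c a, LinearMap.smul_apply]
      exact ⟨I.smul_mem c iha.1, I.smul_mem c iha.2⟩
  refine ⟨key _ _ rfl ?_, key _ _ rfl ?_, hle⟩
  · rintro _ ⟨α, β, h, k, x, hx, y, hy, rfl⟩ γ z hz s
    have hl : ang s z (ang h x y + ((-1 : K) ^ (α.val * β.val)) • ang k y x)
        ∈ superAnnPlus2 K Lg ang := by
      apply hle
      have e : ((-1 : K) ^ (α.val * β.val)) * ((-1 : K) ^ (α.val * β.val)) = 1 := by
        rw [← mul_pow]; simp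
      have h1 := mgen (γ + α) β h k _ (hgrade s γ α z hz x hx) y hy
      have h2 := mgen (γ + β) α k h _ (hgrade s γ β z hz y hy) x hx
      have h3 := Submodule.add_mem _ h1 (Submodule.smul_mem _ ((-1 : K) ^ (α.val * β.val)) h2)
      convert h3 using 1
      rw [map_add, map_smul, hleft s h α β γ x hx y hy z hz, hleft s k β α γ y hy x hx z hz,
        mul_comm β.val α.val, smul_sub, smul_sub, smul_smul, e, one_smul]
      abel
    refine ⟨?_, hl⟩
    have hm : ang h x y + ((-1 : K) ^ (α.val * β.val)) • ang k y x ∈ Lg (α + β) := by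
      refine Submodule.add_mem _ (hgrade h α β x hx y hy) (Submodule.smul_mem _ _ ?_)
      rw [add_comm]
      exact hgrade k β α y hy x hx
    exact (Submodule.add_mem_iff_left _ (Submodule.smul_mem _ _ hl)).1
      (pgen (α + β) γ s s _ hm z hz)
  · rintro _ ⟨α, β, h, k, x, hx, y, hy, rfl⟩ γ z hz s
    constructor
    · rw [map_sub, LinearMap.sub_apply, hswap h s α β γ x hx y hy z hz,
        hswap k s α β γ x hx y hy z hz]
      exact mgen (α + β) γ h k _ (hgrade s α β x hx y hy) z hz
    · have h1 := mgen (γ + α) β h k _ (hgrade s γ α z hz x hx) y hy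
      have h2 := mgen (γ + β) α h k _ (hgrade s γ β z hz y hy) x hx
      have h3 := Submodule.sub_mem _ h1 (Submodule.smul_mem _ ((-1 : K) ^ (α.val * β.val)) h2)
      convert h3 using 1
      rw [map_sub, hleft s h α β γ x hx y hy z hz, hleft s k α β γ x hx y hy z hz, smul_sub]
      abel
end

section
/- Let L = L₀ ⊕ L₁ be a Lie-like superalgebra^{2-nd} induced by a nonempty set S with minus super annihilator L^{sann,−}. Then on the quotient vector space L/L^{sann,−}, graded by the images of L₀ and L₁, there is a well-defined bilinear operation ⟨x + L^{sann,−}, y + L^{sann,−}⟩ := ⟨x,y⟩_k + L^{sann,−} for any k ∈ S (independent of the choice of k), the operation respects the grading, and with this operation L/L^{sann,−} is a Leibniz superalgebra: ⟨⟨u,v⟩, w⟩ = ⟨u, ⟨v,w⟩⟩ + (−1)^{βγ}⟨⟨u,w⟩, v⟩ for homogeneous classes u, v, w of degrees α, β, γ. -/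
/-- On `L / L^{sann,−}`, graded by the images of `L₀` and `L₁`,
there is a well-defined bilinear operation `⟨x̄, ȳ⟩ = ⟨x,y⟩_k + L^{sann,−}`
(independent of `k ∈ S`) which respects the grading and makes the quotient a
Leibniz superalgebra: `⟨⟨u,v⟩, w⟩ = ⟨u, ⟨v,w⟩⟩ + (−1)^{βγ}⟨⟨u,w⟩, v⟩` on
homogeneous classes of degrees `α, β, γ`. -/
theorem stmt_18 (K : Type*) [Field K] (L : Type*) [AddCommGroup L] [Module K L]
    (S : Type*) [Nonempty S]
    (Lg : ZMod 2 → Submodule K L) (hdec : IsCompl (Lg 0) (Lg 1))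
    (ang : S → L →ₗ[K] L →ₗ[K] L)
    (hgrade : ∀ (k : S) (α β : ZMod 2), ∀ x ∈ Lg α, ∀ y ∈ Lg β,
      ang k x y ∈ Lg (α + β))
    (hjac : ∀ (h k : S) (α β γ : ZMod 2), ∀ x ∈ Lg α, ∀ y ∈ Lg β, ∀ z ∈ Lg γ,
      ang k (ang h x y) z
        = ang h x (ang k y z) + ((-1 : K) ^ (β.val * γ.val)) • ang h (ang k x z) y)
    (hswap : ∀ (h k : S) (α β γ : ZMod 2), ∀ x ∈ Lg α, ∀ y ∈ Lg β, ∀ z ∈ Lg γ,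
      ang k (ang h x y) z = ang h (ang k x y) z) :
    ∃ qang : (L ⧸ superAnnMinus2 K Lg ang) →ₗ[K] (L ⧸ superAnnMinus2 K Lg ang) →ₗ[K]
        (L ⧸ superAnnMinus2 K Lg ang),
      (∀ (k : S) (x y : L),
        qang (Submodule.Quotient.mk x) (Submodule.Quotient.mk y)
          = Submodule.Quotient.mk (ang k x y)) ∧
      (∀ (α β : ZMod 2),
        ∀ u ∈ (Lg α).map (superAnnMinus2 K Lg ang).mkQ,
        ∀ v ∈ (Lg β).map (superAnnMinus2 K Lg ang).mkQ,
          qang u v ∈ (Lg (α + β)).map (superAnnMinus2 K Lg ang).mkQ) ∧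
      (∀ (α β γ : ZMod 2),
        ∀ u ∈ (Lg α).map (superAnnMinus2 K Lg ang).mkQ,
        ∀ v ∈ (Lg β).map (superAnnMinus2 K Lg ang).mkQ,
        ∀ w ∈ (Lg γ).map (superAnnMinus2 K Lg ang).mkQ,
          qang (qang u v) w
            = qang u (qang v w)
              + ((-1 : K) ^ (β.val * γ.val)) • qang (qang u w) v) := by
  have hI : ∃ I, I = superAnnMinus2 K Lg ang := ⟨_, rfl⟩
  obtain ⟨I, hIe⟩ := hI
  rw [← hIe]
  have hgen : ∀ (h k : S) (α β : ZMod 2), ∀ x ∈ Lg α, ∀ y ∈ Lg β,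
      ang h x y - ang k x y ∈ I := by
    intro h k α β x hx y hy
    rw [hIe]
    exact Submodule.subset_span ⟨α, β, h, k, x, hx, y, hy, rfl⟩
  have hsplit : ∀ x : L, ∃ a ∈ Lg 0, ∃ b ∈ Lg 1, a + b = x := by
    intro x
    have hx : x ∈ Lg 0 ⊔ Lg 1 := by rw [hdec.sup_eq_top]; trivial
    exact Submodule.mem_sup.mp hx
  have hgen' : ∀ (h k : S) (x y : L), ang h x y - ang k x y ∈ I := by
    intro h k x y
    obtain ⟨a, ha, b, hb, rfl⟩ := hsplit x
    obtain ⟨c, hc, d, hd, rfl⟩ := hsplit y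
    have e : ang h (a + b) (c + d) - ang k (a + b) (c + d)
        = (ang h a c - ang k a c) + (ang h a d - ang k a d)
          + ((ang h b c - ang k b c) + (ang h b d - ang k b d)) := by
      simp only [map_add, LinearMap.add_apply]; abel
    rw [e]
    exact I.add_mem (I.add_mem (hgen _ _ _ _ _ ha _ hc) (hgen _ _ _ _ _ ha _ hd))
      (I.add_mem (hgen _ _ _ _ _ hb _ hc) (hgen _ _ _ _ _ hb _ hd))
  have hleftg : ∀ (k h h' : S) (α β γ : ZMod 2), ∀ x ∈ Lg α, ∀ z ∈ Lg β, ∀ y ∈ Lg γ,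
      ang k (ang h x z - ang h' x z) y ∈ I := by
    intro k h h' α β γ x hx z hz y hy
    rw [map_sub, LinearMap.sub_apply, hswap h k _ _ _ x hx z hz y hy,
      hswap h' k _ _ _ x hx z hz y hy]
    exact hgen' _ _ _ _
  have hrightg : ∀ (k h h' : S) (α β γ : ZMod 2), ∀ x ∈ Lg α, ∀ z ∈ Lg β, ∀ y ∈ Lg γ,
      ang k y (ang h x z - ang h' x z) ∈ I := by
    intro k h h' α β γ x hx z hz y hy
    have e1 := hjac k h _ _ _ y hy x hx z hz
    have e2 := hjac k h' _ _ _ y hy x hx z hz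
    have e : ang k y (ang h x z - ang h' x z)
        = (ang h (ang k y x) z - ang h' (ang k y x) z)
          - ((-1 : K) ^ (α.val * β.val)) • ang k (ang h y z - ang h' y z) x := by
      rw [e1, e2]
      simp only [map_sub, LinearMap.sub_apply, smul_sub]; abel
    rw [e]
    exact I.sub_mem (hgen' _ _ _ _) (I.smul_mem _ (hleftg _ _ _ _ _ _ _ hy _ hz _ hx))
  have hleft : ∀ (k : S) (y : L), ∀ a ∈ I, ang k a y ∈ I := by
    intro k y a ha
    have hle : I ≤ I.comap ((ang k).flip y) := by
      conv_lhs => rw [hIe]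
      refine Submodule.span_le.mpr ?_
      rintro _ ⟨α, β, h, h', x, hx, z, hz, rfl⟩
      obtain ⟨c, hc, d, hd, rfl⟩ := hsplit y
      change ang k _ (c + d) ∈ I
      rw [map_add]
      exact I.add_mem (hleftg _ _ _ _ _ _ _ hx _ hz _ hc) (hleftg _ _ _ _ _ _ _ hx _ hz _ hd)
    exact hle ha
  have hright : ∀ (k : S) (y : L), ∀ a ∈ I, ang k y a ∈ I := by
    intro k y a ha
    have hle : I ≤ I.comap (ang k y) := by
      conv_lhs => rw [hIe]
      refine Submodule.span_le.mpr ?_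
      rintro _ ⟨α, β, h, h', x, hx, z, hz, rfl⟩
      obtain ⟨c, hc, d, hd, rfl⟩ := hsplit y
      change ang k (c + d) _ ∈ I
      rw [map_add, LinearMap.add_apply]
      exact I.add_mem (hrightg _ _ _ _ _ _ _ hx _ hz _ hc) (hrightg _ _ _ _ _ _ _ hx _ hz _ hd)
    exact hle ha
  obtain ⟨k₀⟩ := ‹Nonempty S›
  let g : L →ₗ[K] (L ⧸ I) →ₗ[K] (L ⧸ I) :=
    { toFun := fun x => I.mapQ I (ang k₀ x) (fun a ha => hright k₀ x a ha)
      map_add' := by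
        intro x y
        ext z
        simp
      map_smul' := by
        intro c x
        ext z
        simp }
  let q : (L ⧸ I) →ₗ[K] (L ⧸ I) →ₗ[K] (L ⧸ I) := I.liftQ g (by
    intro a ha
    rw [LinearMap.mem_ker]
    ext z
    change (Submodule.Quotient.mk (ang k₀ a z) : L ⧸ I) = 0
    exact (Submodule.Quotient.mk_eq_zero I).mpr (hleft k₀ z a ha))
  have hq : ∀ (k : S) (x y : L), q (Submodule.Quotient.mk x) (Submodule.Quotient.mk y)
      = Submodule.Quotient.mk (ang k x y) := by
    intro k x y
    change (Submodule.Quotient.mk (ang k₀ x y) : L ⧸ I) = _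
    exact (Submodule.Quotient.eq I).mpr (hgen' _ _ _ _)
  refine ⟨q, hq, ?_, ?_⟩
  · rintro α β _ ⟨x, hx, rfl⟩ _ ⟨y, hy, rfl⟩
    exact ⟨ang k₀ x y, hgrade _ _ _ _ hx _ hy, (hq k₀ x y).symm⟩
  · rintro α β γ _ ⟨x, hx, rfl⟩ _ ⟨y, hy, rfl⟩ _ ⟨z, hz, rfl⟩
    simp only [Submodule.mkQ_apply, hq k₀]
    rw [hjac k₀ k₀ _ _ _ x hx y hy z hz]
    rfl
end
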